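/- Let h be a symmetric real 7×7 matrix, let X ∈ ℝ⁷, and define the totally antisymmetric 3-tensor η_{ijk} = Σ_l (h_{il} φ_{ljk} + h_{jl} φ_{ilk} + h_{kl} φ_{ijl}) + Σ_n X_n ψ_{nijk} (the general 3-form η = i(h) + X⌐ψ). Then for all a,b: (1/24) Σ_{σ∈S₇} sgn(σ) φ_{a σ(1) σ(2)} φ_{b σ(3) σ(4)} η_{σ(5) σ(6) σ(7)} = −2 tr(h) δ_{ab} − 4 h_{ab}. (This is the formula j(i(h) + X⌐ψ) = −2 tr(h) g − 4 h; in particular Ω³₇ lies in the kernel of j and j is injective on Ω³₁ ⊕ Ω³₂₇.) -/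

import Mathlib

open Finset

noncomputable section

def phi0 : Fin 7 → Fin 7 → Fin 7 → ℝ := fun i j k =>
  if (i, j, k) = (0, 1, 2) then -1
  else if (i, j, k) = (0, 3, 4) then -1
  else if (i, j, k) = (0, 5, 6) then -1
  else if (i, j, k) = (1, 3, 5) then -1
  else if (i, j, k) = (1, 4, 6) then 1
  else if (i, j, k) = (2, 3, 6) then 1
  else if (i, j, k) = (2, 4, 5) then 1
  else 0

/-- The standard G₂ 3-form on ℝ⁷ (paper's orientation convention), as a totally
antisymmetric array with `φ₁₂₃ = φ₁₄₅ = φ₁₆₇ = φ₂₄₆ = −1`, `φ₂₅₇ = φ₃₄₇ = φ₃₅₆ = 1`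
(indices shifted to start at 0). -/
def phi (i j k : Fin 7) : ℝ :=
  ∑ σ : Equiv.Perm (Fin 3),
    ((Equiv.Perm.sign σ : ℤ) : ℝ) *
      phi0 (![i, j, k] (σ 0)) (![i, j, k] (σ 1)) (![i, j, k] (σ 2))

def psi0 : Fin 7 → Fin 7 → Fin 7 → Fin 7 → ℝ := fun i j k l =>
  if (i, j, k, l) = (0, 1, 3, 6) then 1
  else if (i, j, k, l) = (0, 1, 4, 5) then 1
  else if (i, j, k, l) = (0, 2, 3, 5) then 1
  else if (i, j, k, l) = (0, 2, 4, 6) then -1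
  else if (i, j, k, l) = (1, 2, 3, 4) then -1
  else if (i, j, k, l) = (1, 2, 5, 6) then -1
  else if (i, j, k, l) = (3, 4, 5, 6) then -1
  else 0

/-- The dual 4-form ψ = ∗φ of the standard G₂-structure, as a totally antisymmetric
array with `ψ₁₂₄₇ = ψ₁₂₅₆ = ψ₁₃₄₆ = 1`, `ψ₁₃₅₇ = ψ₂₃₄₅ = ψ₂₃₆₇ = ψ₄₅₆₇ = −1`
(indices shifted to start at 0). -/
def psi (i j k l : Fin 7) : ℝ :=
  ∑ σ : Equiv.Perm (Fin 4),
    ((Equiv.Perm.sign σ : ℤ) : ℝ) *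
      psi0 (![i, j, k, l] (σ 0)) (![i, j, k, l] (σ 1)) (![i, j, k, l] (σ 2))
        (![i, j, k, l] (σ 3))

/-- Kronecker delta. -/
def kdelta (i j : Fin 7) : ℝ := if i = j then 1 else 0

/-- The G₂ cross product on ℝ⁷: `(u × v)_k = Σ_{i,j} φ_{ijk} u_i v_j`. -/
def cross (u v : Fin 7 → ℝ) : Fin 7 → ℝ := fun k =>
  ∑ i, ∑ j, phi i j k * u i * v j

/-- Euclidean inner product on ℝ⁷. -/
def dot (u v : Fin 7 → ℝ) : ℝ := ∑ i, u i * v i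

end

/-- Base-4 digit table of `phi + 1`. -/
def phiT : ℕ := 107017740078137563778303625005280651901413321762938078447317986013650337496239065835251873795101497777637913876432571572366743332539595096094464014754256056428264030118507505741721742228603414395146642478421

/-- Base-4 digit table of `psi + 1`. -/
def psiT : ℕ := 1171973856063844332343777255357449592030277090494539679018420680727662422130114072039610932105261384741384938875164183486942179274583840550861630669156332206629532737964904214891141890799636829890775709358033174992628006063894896360746320064921766309875232915764304952489296603498896267184909950871034245184410957142893394938604344714415719448155589700789146183675327907128494044639650393670698283597489557182425078489598907225591281886608370751101813797125750565255111575815354014471788995228265810699787692133964810635475970063763235427160135484048014637202756094636688492773880216929171975806241255759762425407284671889937190057577570207369030154924339948709820200913982571326214857012061640793237654724452967160980793465989833451800532909599909265413154753029636683639407087685481014417138156140919244858373861800450614773272400722320655054057716915402687042904663996074306165534382202722410406694029740272852345643561638867189556747599303246157690647655793624134127662590426193608674262696853865673057664701306154742057672428764008560310395279319010805531773381559405325142276266895526063925208626581445796516924106966100395660297285843042386107496188215571308721318156533384481179254767694392984860332106811146587403365289044634291350656613196183317913418462164050920101052028843829556475928796406098335374491249317568496453051824066008345151179590688364280755164213472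10800047671262513754711513311092535226827721839413683748919669844956501

def phiZ (i j k : Fin 7) : ℤ :=
  Int.subNatNat (Nat.mod (Nat.div phiT
    (Nat.pow 4 (Nat.add (Nat.mul 49 i.val) (Nat.add (Nat.mul 7 j.val) k.val)))) 4) 1

def psiZ (i j k l : Fin 7) : ℤ :=
  Int.subNatNat (Nat.mod (Nat.div psiT
    (Nat.pow 4 (Nat.add (Nat.mul 343 i.val) (Nat.add (Nat.mul 49 j.val)
      (Nat.add (Nat.mul 7 k.val) l.val))))) 4) 1

def sg (x y : Fin 7) : ℤ :=
  bif Nat.beq x.val y.val then Int.ofNat 0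
  else bif Nat.ble x.val y.val then Int.ofNat 1 else Int.negSucc 0

def kd (i j : Fin 7) : ℤ := bif Nat.beq i.val j.val then 1 else 0

/-- lazy multiplication -/
def lz (x y : ℤ) : ℤ := bif Nat.beq (Int.natAbs x) 0 then Int.ofNat 0 else Int.mul x y

lemma lz_eq (x y : ℤ) : lz x y = x * y := by
  unfold lz
  by_cases h : x = 0
  · subst h
    simp
  · have : Nat.beq (Int.natAbs x) 0 = false := by
      rw [← Bool.not_eq_true, Nat.beq_eq]; simpa using h
    rw [this]; rfl

def sum7 (f : Fin 7 → ℤ) : ℤ := 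
  Int.add (f ⟨0, by decide⟩) (Int.add (f ⟨1, by decide⟩) (Int.add (f ⟨2, by decide⟩)
    (Int.add (f ⟨3, by decide⟩) (Int.add (f ⟨4, by decide⟩) (Int.add (f ⟨5, by decide⟩)
      (f ⟨6, by decide⟩))))))

lemma sum7_eq (f : Fin 7 → ℤ) : sum7 f = ∑ i, f i := by
  rw [Fin.sum_univ_seven]
  change f 0 + (f 1 + (f 2 + (f 3 + (f 4 + (f 5 + f 6))))) = _
  ring

lemma sg_spec : ∀ x y : Fin 7, sg x y = if x = y then 0 else if x < y then 1 else -1 := by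
  decide +kernel

lemma kd_spec : ∀ x y : Fin 7, kd x y = if x = y then 1 else 0 := by
  decide +kernel

def phi0Z : Fin 7 → Fin 7 → Fin 7 → ℤ := fun i j k =>
  if (i, j, k) = (0, 1, 2) then -1
  else if (i, j, k) = (0, 3, 4) then -1
  else if (i, j, k) = (0, 5, 6) then -1
  else if (i, j, k) = (1, 3, 5) then -1
  else if (i, j, k) = (1, 4, 6) then 1
  else if (i, j, k) = (2, 3, 6) then 1
  else if (i, j, k) = (2, 4, 5) then 1
  else 0

def psi0Z : Fin 7 → Fin 7 → Fin 7 → Fin 7 → ℤ := fun i j k l =>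
  if (i, j, k, l) = (0, 1, 3, 6) then 1
  else if (i, j, k, l) = (0, 1, 4, 5) then 1
  else if (i, j, k, l) = (0, 2, 3, 5) then 1
  else if (i, j, k, l) = (0, 2, 4, 6) then -1
  else if (i, j, k, l) = (1, 2, 3, 4) then -1
  else if (i, j, k, l) = (1, 2, 5, 6) then -1
  else if (i, j, k, l) = (3, 4, 5, 6) then -1
  else 0

lemma phi0_cast (i j k : Fin 7) : phi0 i j k = (phi0Z i j k : ℝ) := by
  unfold phi0 phi0Z; push_cast; rfl

lemma psi0_cast (i j k l : Fin 7) : psi0 i j k l = (psi0Z i j k l : ℝ) := by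
  unfold psi0 psi0Z; push_cast; rfl

lemma sum_perm_succ {n : ℕ} (f : Equiv.Perm (Fin (n+1)) → ℝ) :
    ∑ σ, f σ = ∑ p : Fin (n+1), ∑ e : Equiv.Perm (Fin n), f (Equiv.Perm.decomposeFin.symm (p, e)) := by
  rw [← Equiv.Perm.decomposeFin.symm.sum_comp, Fintype.sum_prod_type]

lemma phi_expand (i j k : Fin 7) : phi i j k =
    ((phi0Z i j k - phi0Z i k j - phi0Z j i k + phi0Z j k i + phi0Z k i j - phi0Z k j i : ℤ) : ℝ) := by
  have h1 : ∀ f : Equiv.Perm (Fin 3) → ℝ, ∑ σ, f σ =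
      f 1 + f (Equiv.swap 1 2) + f (Equiv.swap 0 1) + f (Equiv.swap 0 1 * Equiv.swap 1 2)
      + f (Equiv.swap 1 2 * Equiv.swap 0 1) + f (Equiv.swap 0 2) := by
    intro f
    have : (univ : Finset (Equiv.Perm (Fin 3))) = {1, Equiv.swap 1 2, Equiv.swap 0 1, Equiv.swap 0 1 * Equiv.swap 1 2, Equiv.swap 1 2 * Equiv.swap 0 1, Equiv.swap 0 2} := by decide +kernel
    rw [this]
    repeat rw [Finset.sum_insert (by decide +kernel)]
    rw [Finset.sum_singleton]; ring
  unfold phi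
  simp only [phi0_cast]
  rw [h1]
  simp [Equiv.swap_apply_def]
  ring

lemma phi_cast (i j k : Fin 7) : phi i j k = (phiZ i j k : ℝ) := by
  rw [phi_expand]
  congr 1
  revert i j k
  decide +kernel

/-- `psi` on sorted indices, read off the table. -/
def psiS (i j k l : Fin 7) : ℤ :=
  bif Nat.ble j.val i.val then Int.ofNat 0 else bif Nat.ble k.val j.val then Int.ofNat 0
  else bif Nat.ble l.val k.val then Int.ofNat 0 else psiZ i j k l

lemma psi0Z_eq : ∀ i j k l : Fin 7, psi0Z i j k l = psiS i j k l := by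
  decide +kernel

def alt3 (f : Fin 7 → Fin 7 → Fin 7 → ℤ) (i j k : Fin 7) : ℤ :=
  Int.add (Int.add (f i j k) (Int.add (f j k i) (f k i j)))
    (Int.neg (Int.add (f i k j) (Int.add (f j i k) (f k j i))))

lemma alt3_eq (f : Fin 7 → Fin 7 → Fin 7 → ℤ) (i j k : Fin 7) : alt3 f i j k =
    (f i j k + (f j k i + f k i j)) + -(f i k j + (f j i k + f k j i)) := rfl

def alt4 (i j k l : Fin 7) : ℤ :=
  Int.add (Int.add (alt3 (psiS i) j k l) (Int.neg (alt3 (psiS j) i k l)))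
    (Int.add (alt3 (psiS k) i j l) (Int.neg (alt3 (psiS l) i j k)))

lemma alt4_eq (i j k l : Fin 7) : alt4 i j k l =
    (alt3 (psiS i) j k l + - alt3 (psiS j) i k l) +
      (alt3 (psiS k) i j l + -alt3 (psiS l) i j k) := rfl

lemma alt4_psiZ : ∀ i j k l : Fin 7, alt4 i j k l = psiZ i j k l := by
  decide +kernel

lemma psi_cast (i j k l : Fin 7) : psi i j k l = (psiZ i j k l : ℝ) := by
  rw [← alt4_psiZ, alt4_eq]
  simp only [alt3_eq, ← psi0Z_eq]
  push_cast
  simp only [← psi0_cast]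
  unfold psi
  have h4 : ∀ f : Equiv.Perm (Fin 4) → ℝ, ∑ σ, f σ = ∑ p : Fin 4, ∑ e : Equiv.Perm (Fin 3),
      f (Equiv.Perm.decomposeFin.symm (p, e)) := sum_perm_succ
  have h3 : ∀ f : Equiv.Perm (Fin 3) → ℝ, ∑ σ, f σ = ∑ p : Fin 3, ∑ e : Equiv.Perm (Fin 2),
      f (Equiv.Perm.decomposeFin.symm (p, e)) := sum_perm_succ
  have h2 : ∀ f : Equiv.Perm (Fin 2) → ℝ, ∑ σ, f σ = f 1 + f (Equiv.swap 0 1) := by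
    intro f
    have : (univ : Finset (Equiv.Perm (Fin 2))) = {1, Equiv.swap 0 1} := by decide +kernel
    rw [this, Finset.sum_insert (by decide +kernel), Finset.sum_singleton]
  simp only [h4, h3, h2]
  simp only [Fin.sum_univ_four, Fin.sum_univ_three]
  have d42 : ∀ (p : Fin 4) (e : Equiv.Perm (Fin 3)), Equiv.Perm.decomposeFin.symm (p, e) 2 =
      Equiv.swap 0 p (e 1).succ := fun p e => Equiv.Perm.decomposeFin_symm_apply_succ e p 1
  have d43 : ∀ (p : Fin 4) (e : Equiv.Perm (Fin 3)), Equiv.Perm.decomposeFin.symm (p, e) 3 =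
      Equiv.swap 0 p (e 2).succ := fun p e => Equiv.Perm.decomposeFin_symm_apply_succ e p 2
  have d32 : ∀ (p : Fin 3) (e : Equiv.Perm (Fin 2)), Equiv.Perm.decomposeFin.symm (p, e) 2 =
      Equiv.swap 0 p (e 1).succ := fun p e => Equiv.Perm.decomposeFin_symm_apply_succ e p 1
  simp [Equiv.Perm.decomposeFin.symm_sign, Equiv.swap_apply_def, d42, d43, d32]
  ring

def epsF (v : Fin 7 → Fin 7) : ℤ := ∏ i, ∏ j ∈ Finset.Ioi i, sg (v i) (v j)

lemma epsF_perm (σ : Equiv.Perm (Fin 7)) : epsF σ = (Equiv.Perm.sign σ : ℤ) := by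
  rw [Equiv.Perm.sign_eq_prod_prod_Ioi, epsF]
  push_cast
  refine Finset.prod_congr rfl fun i _ => Finset.prod_congr rfl fun j hj => ?_
  rw [sg_spec, if_neg]
  · split_ifs <;> rfl
  · intro h
    exact (Finset.mem_Ioi.1 hj).ne (σ.injective h)

lemma epsF_not_inj (v : Fin 7 → Fin 7) (hv : ¬ Function.Injective v) : epsF v = 0 := by
  have : ∃ i j, i < j ∧ v i = v j := by
    simp only [Function.Injective, not_forall] at hv
    obtain ⟨i, j, h, hne⟩ := hv
    rcases lt_or_gt_of_ne hne with h1 | h1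
    · exact ⟨i, j, h1, h⟩
    · exact ⟨j, i, h1, h.symm⟩
  obtain ⟨i, j, hij, h⟩ := this
  refine Finset.prod_eq_zero (mem_univ i) (Finset.prod_eq_zero (Finset.mem_Ioi.2 hij) ?_)
  rw [sg_spec, if_pos h]

lemma sum_perm_eq (F : (Fin 7 → Fin 7) → ℝ) :
    ∑ σ : Equiv.Perm (Fin 7), ((Equiv.Perm.sign σ : ℤ) : ℝ) * F σ = ∑ v, (epsF v : ℝ) * F v := by
  refine Finset.sum_of_injOn (fun σ : Equiv.Perm (Fin 7) => (σ : Fin 7 → Fin 7)) ?_ ?_ ?_ ?_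
  · intro a _ b _ h; exact Equiv.coe_fn_injective h
  · intro a _; simp
  · intro v _ hv
    rw [epsF_not_inj, Int.cast_zero, zero_mul]
    intro hi
    apply hv
    exact ⟨Equiv.ofBijective v (Finite.injective_iff_bijective.1 hi), by simp, rfl⟩
  · intro σ _
    rw [epsF_perm]

lemma sum_snoc {n : ℕ} (F : (Fin (n+1) → Fin 7) → ℝ) :
    ∑ v, F v = ∑ x : Fin 7, ∑ w : Fin n → Fin 7, F (Fin.snoc w x) := by
  rw [← (Fin.snocEquiv (fun _ : Fin (n+1) => Fin 7)).sum_comp, Fintype.sum_prod_type]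
  rfl

lemma sum_seven (F : (Fin 7 → Fin 7) → ℝ) :
    ∑ v, F v = ∑ k, ∑ j, ∑ i, ∑ s, ∑ r, ∑ q, ∑ p, F ![p, q, r, s, i, j, k] := by
  rw [sum_snoc]
  refine Finset.sum_congr rfl fun k _ => ?_
  rw [sum_snoc]
  refine Finset.sum_congr rfl fun j _ => ?_
  rw [sum_snoc]
  refine Finset.sum_congr rfl fun i _ => ?_
  rw [sum_snoc]
  refine Finset.sum_congr rfl fun s _ => ?_
  rw [sum_snoc]
  refine Finset.sum_congr rfl fun r _ => ?_
  rw [sum_snoc]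
  refine Finset.sum_congr rfl fun q _ => ?_
  rw [sum_snoc]
  refine Finset.sum_congr rfl fun p _ => ?_
  rw [Fintype.sum_unique]
  congr 1
  funext x
  fin_cases x <;> rfl

/-- The contraction of two copies of `phi` with the volume form, evaluated with pruning. -/
def cZ (a b i j k : Fin 7) : ℤ :=
  lz (sg i j) <| lz (sg i k) <| lz (sg j k) <| sum7 fun p =>
    lz (sg p i) <| lz (sg p j) <| lz (sg p k) <| sum7 fun q =>
      lz (phiZ a p q) <| lz (sg p q) <| lz (sg q i) <| lz (sg q j) <| lz (sg q k) <| sum7 fun r =>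
        lz (sg p r) <| lz (sg q r) <| lz (sg r i) <| lz (sg r j) <| lz (sg r k) <| sum7 fun s =>
          lz (phiZ b r s) <| lz (sg p s) <| lz (sg q s) <| lz (sg r s) <| lz (sg s i) <|
            lz (sg s j) (sg s k)

def cF (a b i j k : Fin 7) : ℤ :=
  Int.mul (-4) (Int.add (lz (kd a i) (phiZ b j k)) (Int.add (lz (kd a j) (phiZ i b k))
    (Int.add (lz (kd a k) (phiZ i j b)) (Int.add (lz (kd b i) (phiZ a j k))
      (Int.add (lz (kd b j) (phiZ i a k)) (lz (kd b k) (phiZ i j a)))))))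

lemma cF_eq (a b i j k : Fin 7) : cF a b i j k =
    (-4) * (kd a i * phiZ b j k + (kd a j * phiZ i b k + (kd a k * phiZ i j b +
      (kd b i * phiZ a j k + (kd b j * phiZ i a k + kd b k * phiZ i j a))))) := by
  unfold cF
  simp only [lz_eq]
  rfl

lemma epsF_vec (p q r s i j k : Fin 7) : epsF ![p, q, r, s, i, j, k] =
    (sg p q * sg p r * sg p s * sg p i * sg p j * sg p k) *
    (sg q r * sg q s * sg q i * sg q j * sg q k) *
    (sg r s * sg r i * sg r j * sg r k) * (sg s i * sg s j * sg s k) *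
    (sg i j * sg i k) * sg j k := by
  have h0 : Finset.Ioi (0 : Fin 7) = {1, 2, 3, 4, 5, 6} := by decide
  have h1 : Finset.Ioi (1 : Fin 7) = {2, 3, 4, 5, 6} := by decide
  have h2 : Finset.Ioi (2 : Fin 7) = {3, 4, 5, 6} := by decide
  have h3 : Finset.Ioi (3 : Fin 7) = {4, 5, 6} := by decide
  have h4 : Finset.Ioi (4 : Fin 7) = {5, 6} := by decide
  have h5 : Finset.Ioi (5 : Fin 7) = {6} := by decide
  have h6 : Finset.Ioi (6 : Fin 7) = ∅ := by decide
  rw [epsF, Fin.prod_univ_seven, h0, h1, h2, h3, h4, h5, h6]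
  repeat rw [Finset.prod_insert (by decide)]
  simp only [Finset.prod_singleton, Finset.prod_empty]
  change (sg p q * (sg p r * (sg p s * (sg p i * (sg p j * sg p k))))) *
    (sg q r * (sg q s * (sg q i * (sg q j * sg q k)))) *
    (sg r s * (sg r i * (sg r j * sg r k))) * (sg s i * (sg s j * sg s k)) *
    (sg i j * sg i k) * sg j k * 1 = _
  ring

lemma cZ_eq (a b i j k : Fin 7) : cZ a b i j k =
    ∑ s, ∑ r, ∑ q, ∑ p, epsF ![p, q, r, s, i, j, k] * (phiZ a p q * phiZ b r s) := by
  have h : ∀ f : Fin 7 → Fin 7 → Fin 7 → Fin 7 → ℤ,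
      ∑ s, ∑ r, ∑ q, ∑ p, f p q r s = ∑ p, ∑ q, ∑ r, ∑ s, f p q r s := by
    intro f
    have h2 : ∀ g : Fin 7 → Fin 7 → Fin 7 → ℤ,
        ∑ r, ∑ q, ∑ p, g p q r = ∑ p, ∑ q, ∑ r, g p q r := by
      intro g
      calc ∑ r, ∑ q, ∑ p, g p q r = ∑ r, ∑ p, ∑ q, g p q r :=
            Finset.sum_congr rfl fun r _ => Finset.sum_comm
        _ = ∑ p, ∑ r, ∑ q, g p q r := Finset.sum_comm
        _ = _ := Finset.sum_congr rfl fun r _ => Finset.sum_comm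
    calc ∑ s, ∑ r, ∑ q, ∑ p, f p q r s = ∑ s, ∑ p, ∑ q, ∑ r, f p q r s :=
          Finset.sum_congr rfl fun s _ => h2 (fun p q r => f p q r s)
      _ = ∑ p, ∑ s, ∑ q, ∑ r, f p q r s := Finset.sum_comm
      _ = _ := Finset.sum_congr rfl fun p _ => by
        rw [Finset.sum_comm]
        exact Finset.sum_congr rfl fun q _ => Finset.sum_comm
  rw [h]
  simp only [cZ, lz_eq, sum7_eq, epsF_vec, Finset.mul_sum]
  refine Finset.sum_congr rfl fun p _ => Finset.sum_congr rfl fun q _ =>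
    Finset.sum_congr rfl fun r _ => Finset.sum_congr rfl fun s _ => ?_
  ring

lemma sg_anti : ∀ x y : Fin 7, sg x y = - sg y x := by decide +kernel

lemma phiZ_anti1 : ∀ i j k : Fin 7, phiZ i j k = - phiZ j i k := by decide +kernel

lemma phiZ_anti2 : ∀ i j k : Fin 7, phiZ i j k = - phiZ i k j := by decide +kernel

lemma cZ_anti1 (a b i j k : Fin 7) : cZ a b i j k = - cZ a b j i k := by
  simp only [cZ, lz_eq, sum7_eq, Finset.mul_sum, ← Finset.sum_neg_distrib]
  refine Finset.sum_congr rfl fun p _ => Finset.sum_congr rfl fun q _ =>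
    Finset.sum_congr rfl fun r _ => Finset.sum_congr rfl fun s _ => ?_
  rw [sg_anti i j]
  ring

lemma cZ_anti2 (a b i j k : Fin 7) : cZ a b i j k = - cZ a b i k j := by
  simp only [cZ, lz_eq, sum7_eq, Finset.mul_sum, ← Finset.sum_neg_distrib]
  refine Finset.sum_congr rfl fun p _ => Finset.sum_congr rfl fun q _ =>
    Finset.sum_congr rfl fun r _ => Finset.sum_congr rfl fun s _ => ?_
  rw [sg_anti j k]
  ring

lemma cF_anti1 (a b i j k : Fin 7) : cF a b i j k = - cF a b j i k := by
  simp only [cF_eq]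
  rw [phiZ_anti1 i b k, phiZ_anti1 i j b, phiZ_anti1 i a k, phiZ_anti1 i j a]
  rw [phiZ_anti1 b i k, phiZ_anti1 a i k, phiZ_anti1 j b k, phiZ_anti1 j a k]
  ring

lemma cF_anti2 (a b i j k : Fin 7) : cF a b i j k = - cF a b i k j := by
  simp only [cF_eq]
  rw [phiZ_anti2 i b k, phiZ_anti2 i j b, phiZ_anti2 i a k, phiZ_anti2 i j a,
    phiZ_anti2 b j k, phiZ_anti2 a j k]
  ring

lemma cZ_eq_cF_sorted : ∀ i j k : Fin 7, i < j → j < k → ∀ a b : Fin 7,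
    cZ a b i j k = cF a b i j k := by
  decide +kernel

lemma anti_zero (f : Fin 7 → Fin 7 → Fin 7 → ℤ) (h1 : ∀ i j k, f i j k = - f j i k)
    (h2 : ∀ i j k, f i j k = - f i k j) (h : ∀ i j k, i < j → j < k → f i j k = 0)
    (i j k : Fin 7) : f i j k = 0 := by
  have e1 : ∀ i k, f i i k = 0 := fun i k => by linarith [h1 i i k]
  have e2 : ∀ i j, f i j j = 0 := fun i j => by linarith [h2 i j j]
  rcases lt_trichotomy i j with hij | rfl | hij
  · rcases lt_trichotomy j k with hjk | rfl | hjk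
    · exact h _ _ _ hij hjk
    · exact e2 _ _
    · rcases lt_trichotomy i k with hik | rfl | hik
      · linarith [h2 i j k, h i k j hik hjk]
      · linarith [h2 i j i, e1 i j]
      · linarith [h2 i j k, h1 i k j, h k i j hik hij]
  · exact e1 _ _
  · rcases lt_trichotomy i k with hik | rfl | hik
    · linarith [h1 i j k, h j i k hij hik]
    · linarith [h1 i j i, e2 j i]
    · rcases lt_trichotomy j k with hjk | rfl | hjk
      · linarith [h1 i j k, h2 j i k, h j k i hjk hik]
      · exact e2 _ _
      · linarith [h1 i j k, h2 j i k, h1 j k i, h k j i hjk hij]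

lemma cZ_eq_cF (a b i j k : Fin 7) : cZ a b i j k = cF a b i j k := by
  refine sub_eq_zero.1 (anti_zero (fun i j k => cZ a b i j k - cF a b i j k) ?_ ?_ ?_ i j k)
  · intro i j k
    rw [cZ_anti1, cF_anti1]; ring
  · intro i j k
    rw [cZ_anti2, cF_anti2]; ring
  · intro i j k hij hjk
    exact sub_eq_zero.2 (cZ_eq_cF_sorted i j k hij hjk a b)

lemma contract_h : ∀ a b p q : Fin 7,
    sum7 (fun j => sum7 fun k => lz (phiZ q j k) (cF a b p j k)) =
      -16 * (kd a b * kd p q + kd a p * kd b q + kd a q * kd b p) := by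
  decide +kernel

lemma contract_X : ∀ a b n : Fin 7,
    sum7 (fun i => sum7 fun j => sum7 fun k => lz (psiZ n i j k) (cF a b i j k)) = 0 := by
  decide +kernel

lemma main_sum (h : Fin 7 → Fin 7 → ℝ) (X : Fin 7 → ℝ)
    (hsymm : ∀ i j, h j i = h i j) (a b : Fin 7) :
    ∑ i, ∑ j, ∑ k, (cF a b i j k : ℝ) *
      ((∑ l, (h i l * phi l j k + h j l * phi i l k + h k l * phi i j l))
      + ∑ n, X n * psi n i j k) = 24 * (-2 * (∑ i, h i i) * kdelta a b - 4 * h a b) := by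
  have S1 : ∑ i, ∑ j, ∑ k, (cF a b i j k : ℝ) * ∑ l, h i l * phi l j k =
      8 * (-2 * (∑ i, h i i) * kdelta a b - 4 * h a b) := by
    have e : ∀ i, ∑ j, ∑ k, (cF a b i j k : ℝ) * ∑ l, h i l * phi l j k =
        ∑ l, h i l * (-16 * ((kd a b : ℝ) * kd i l + kd a i * kd b l + kd a l * kd b i)) := by
      intro i
      have := fun l => congrArg (fun z : ℤ => (z : ℝ)) (contract_h a b i l)
      simp only [sum7_eq, lz_eq] at this
      push_cast at this
      simp_rw [← this, Finset.mul_sum]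
      rw [Finset.sum_comm' (t' := univ) (s' := fun _ => univ) (by simp)]
      rw [Finset.sum_comm]
      rw [Finset.sum_comm (s := univ) (t := univ) (f := fun l j => ∑ k, h i l * ((phiZ l j k : ℝ) * (cF a b i j k : ℝ)))]
      refine Finset.sum_congr rfl fun j _ => ?_
      rw [Finset.sum_comm]
      refine Finset.sum_congr rfl fun l _ => Finset.sum_congr rfl fun k _ => ?_
      rw [phi_cast]; ring
    simp_rw [e, kd_spec, kdelta]
    push_cast
    simp only [mul_add, Finset.sum_add_distrib]
    simp [hsymm a b, ← Finset.sum_mul]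
    split_ifs <;> ring
  have S2 : ∑ i, ∑ j, ∑ k, (cF a b i j k : ℝ) * ∑ l, h j l * phi i l k =
      ∑ i, ∑ j, ∑ k, (cF a b i j k : ℝ) * ∑ l, h i l * phi l j k := by
    rw [Finset.sum_comm]
    refine Finset.sum_congr rfl fun j _ => Finset.sum_congr rfl fun i _ =>
      Finset.sum_congr rfl fun k _ => ?_
    rw [cF_anti1]
    simp_rw [phi_cast]
    simp_rw [fun l => phiZ_anti1 i l k]
    simp
  have S3 : ∑ i, ∑ j, ∑ k, (cF a b i j k : ℝ) * ∑ l, h k l * phi i j l =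
      ∑ i, ∑ j, ∑ k, (cF a b i j k : ℝ) * ∑ l, h j l * phi i l k := by
    refine Finset.sum_congr rfl fun i _ => ?_
    rw [Finset.sum_comm]
    refine Finset.sum_congr rfl fun j _ => Finset.sum_congr rfl fun k _ => ?_
    rw [cF_anti2]
    simp_rw [phi_cast]
    simp_rw [fun l => phiZ_anti2 i k l]
    simp
  have S4 : ∑ i, ∑ j, ∑ k, (cF a b i j k : ℝ) * ∑ n, X n * psi n i j k = 0 := by
    have := fun l => congrArg (fun z : ℤ => (z : ℝ)) (contract_X a b l)
    simp only [sum7_eq, lz_eq] at this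
    push_cast at this
    calc ∑ i, ∑ j, ∑ k, (cF a b i j k : ℝ) * ∑ n, X n * psi n i j k
        = ∑ i, ∑ j, ∑ k, ∑ n, X n * ((psiZ n i j k : ℝ) * cF a b i j k) := by
          simp_rw [Finset.mul_sum, psi_cast]
          refine Finset.sum_congr rfl fun i _ => Finset.sum_congr rfl fun j _ =>
            Finset.sum_congr rfl fun k _ => Finset.sum_congr rfl fun n _ => ?_
          ring
      _ = ∑ i, ∑ j, ∑ n, ∑ k, X n * ((psiZ n i j k : ℝ) * cF a b i j k) :=
          Finset.sum_congr rfl fun i _ => Finset.sum_congr rfl fun j _ => Finset.sum_comm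
      _ = ∑ i, ∑ n, ∑ j, ∑ k, X n * ((psiZ n i j k : ℝ) * cF a b i j k) :=
          Finset.sum_congr rfl fun i _ => Finset.sum_comm
      _ = ∑ n, ∑ i, ∑ j, ∑ k, X n * ((psiZ n i j k : ℝ) * cF a b i j k) := Finset.sum_comm
      _ = 0 := by
          simp_rw [← Finset.mul_sum, this]
          simp
  simp_rw [Finset.sum_add_distrib, mul_add, Finset.sum_add_distrib]
  rw [S4, S3, S2, S1]
  ring

/-- Proposition `threeformsisomorphismsprop`: for η = i(h) + X⌐ψ one has
j(η) = −2 tr(h) g − 4 h. -/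
theorem j_map_formula (h : Fin 7 → Fin 7 → ℝ) (X : Fin 7 → ℝ)
    (hsymm : ∀ i j, h j i = h i j)
    (η : Fin 7 → Fin 7 → Fin 7 → ℝ)
    (hη : ∀ i j k, η i j k =
      (∑ l, (h i l * phi l j k + h j l * phi i l k + h k l * phi i j l))
      + ∑ n, X n * psi n i j k) :
    ∀ a b : Fin 7,
      (1/24) * ∑ σ : Equiv.Perm (Fin 7),
        ((Equiv.Perm.sign σ : ℤ) : ℝ) *
          (phi a (σ 0) (σ 1) * phi b (σ 2) (σ 3) * η (σ 4) (σ 5) (σ 6))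
        = -2 * (∑ i, h i i) * kdelta a b - 4 * h a b := by
  intro a b
  rw [sum_perm_eq (fun v => phi a (v 0) (v 1) * phi b (v 2) (v 3) * η (v 4) (v 5) (v 6)),
    sum_seven]
  have e : ∀ k j i : Fin 7, ∑ s, ∑ r, ∑ q, ∑ p, (epsF ![p, q, r, s, i, j, k] : ℝ) *
      (phi a p q * phi b r s * η i j k) = (cF a b i j k : ℝ) * η i j k := by
    intro k j i
    rw [← cZ_eq_cF, cZ_eq]
    push_cast
    simp only [Finset.sum_mul]
    refine Finset.sum_congr rfl fun p _ => Finset.sum_congr rfl fun q _ =>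
      Finset.sum_congr rfl fun r _ => Finset.sum_congr rfl fun s _ => ?_
    rw [phi_cast, phi_cast]
    ring
  have e2 : ∑ k, ∑ j, ∑ i, (cF a b i j k : ℝ) * η i j k =
      ∑ i, ∑ j, ∑ k, (cF a b i j k : ℝ) * η i j k := by
    calc ∑ k, ∑ j, ∑ i, (cF a b i j k : ℝ) * η i j k
        = ∑ k, ∑ i, ∑ j, (cF a b i j k : ℝ) * η i j k :=
          Finset.sum_congr rfl fun r _ => Finset.sum_comm
      _ = ∑ i, ∑ k, ∑ j, (cF a b i j k : ℝ) * η i j k := Finset.sum_comm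
      _ = _ := Finset.sum_congr rfl fun r _ => Finset.sum_comm
  have e3 : ∑ k, ∑ j, ∑ i, ∑ s, ∑ r, ∑ q, ∑ p, (epsF ![p, q, r, s, i, j, k] : ℝ) *
      (phi a p q * phi b r s * η i j k) =
      24 * (-2 * (∑ i, h i i) * kdelta a b - 4 * h a b) := by
    simp_rw [e]
    rw [e2]
    simp_rw [hη]
    exact main_sum h X hsymm a b
  refine (congrArg (fun z : ℝ => 1 / 24 * z) e3).trans ?_
  ring
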